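/- Let U, V ∈ SO(3), S = diag(s₁,s₂,s₃), A = U S Vᵀ, with z₁ = s₁−s₂−s₃, z₂ = s₂−s₁−s₃, z₃ = s₃−s₁−s₂, z₄ = s₁+s₂+s₃ and mᵢ ∈ S³ satisfying γ(mᵢ) = U Eᵢ Vᵀ. Define the matrix Fisher density p_F(R) = exp(tr(AᵀR)) / ∫_{SO(3)} exp(tr(AᵀR')) dR' with respect to the Haar probability measure on SO(3), and the Bingham density p_B(q) = exp(Σᵢ zᵢ(mᵢ·q)²) / ∮_{S³} exp(Σᵢ zᵢ(mᵢ·q')²) dq' with respect to the surface measure on S³. Then for every unit quaternion q ∈ S³, p_F(γ(q)) = 2π² · p_B(q). -/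

import Mathlib

/-!
For unit quaternions `p, q` one has `tr (γ(p)ᵀ γ(q)) = 4 (p · q)² - 1`. Since `S = ¼ ∑ zᵢ Eᵢ` and
`∑ zᵢ = 0`, this gives `tr (Aᵀ γ(q)) = ∑ zᵢ (mᵢ · q)²` (`trace_eq_bingham`), so the two numerators
agree and only the normalising constants have to be compared.

For these, `lintegral_gamma` shows `∫ F(γ(q)) dσ(q) = 2π² ∫ F dν` by integrating `F(γ(q) R)` over
`S³ × SO(3)` in both orders. Integrating over `R` first, left invariance of `ν` removes `γ(q)`.
Integrating over `q` first, write `R = γ(p)` (`exists_gamma_eq`); then `γ(q) γ(p) = γ(q p)`, and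
`q ↦ q p` is an orthogonal map of `ℝ⁴`, under which `σ` is invariant.
-/

open Matrix MeasureTheory

/-- Borel/pi measurable structure on `3 × 3` real matrices. -/
noncomputable instance : MeasurableSpace (Matrix (Fin 3) (Fin 3) ℝ) :=
  inferInstanceAs (MeasurableSpace (Fin 3 → Fin 3 → ℝ))

/-- The standard map from unit quaternions `q = (w,x,y,z) ∈ S³ ⊂ ℝ⁴` to rotation matrices. -/
noncomputable def gamma (q : Fin 4 → ℝ) : Matrix (Fin 3) (Fin 3) ℝ :=
  !![1 - 2*(q 2)^2 - 2*(q 3)^2, 2*(q 1)*(q 2) - 2*(q 0)*(q 3), 2*(q 1)*(q 3) + 2*(q 0)*(q 2);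
     2*(q 1)*(q 2) + 2*(q 0)*(q 3), 1 - 2*(q 1)^2 - 2*(q 3)^2, 2*(q 2)*(q 3) - 2*(q 0)*(q 1);
     2*(q 1)*(q 3) - 2*(q 0)*(q 2), 2*(q 2)*(q 3) + 2*(q 0)*(q 1), 1 - 2*(q 1)^2 - 2*(q 2)^2]

/-- `E₁ = diag(1,−1,−1)`, `E₂ = diag(−1,1,−1)`, `E₃ = diag(−1,−1,1)`, `E₄ = I₃`. -/
noncomputable def EMat : Fin 4 → Matrix (Fin 3) (Fin 3) ℝ :=
  ![Matrix.diagonal ![1, -1, -1], Matrix.diagonal ![-1, 1, -1],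
    Matrix.diagonal ![-1, -1, 1], 1]

/-- `R ∈ SO(3)`: a `3 × 3` real orthogonal matrix with determinant `1`. -/
def IsSO3 (R : Matrix (Fin 3) (Fin 3) ℝ) : Prop := Rᵀ * R = 1 ∧ R.det = 1

/-- The unit sphere `S³ ⊂ ℝ⁴`. -/
def unitSphere4 : Set (Fin 4 → ℝ) := {q | ∑ i, (q i)^2 = 1}

/-- `σ` is the surface measure on the unit sphere `S³ ⊂ ℝ⁴`: it is carried by the sphere,
invariant under the orthogonal group `O(4)`, and has total mass `2π²`. -/
def IsSphereMeasure (σ : Measure (Fin 4 → ℝ)) : Prop :=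
  σ unitSphere4ᶜ = 0 ∧ σ Set.univ = ENNReal.ofReal (2 * Real.pi ^ 2) ∧
    ∀ M : Matrix (Fin 4) (Fin 4) ℝ, Mᵀ * M = 1 → σ.map M.mulVec = σ

/-- `ν` is the Haar probability measure on `SO(3)` (viewed as a measure on `3 × 3` matrices):
a probability measure carried by `SO(3)` and invariant under left and right translation. -/
def IsHaarSO3 (ν : Measure (Matrix (Fin 3) (Fin 3) ℝ)) : Prop :=
  ν {R | IsSO3 R}ᶜ = 0 ∧ ν Set.univ = 1 ∧
    (∀ g, IsSO3 g → ν.map (fun R => g * R) = ν) ∧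
    (∀ g, IsSO3 g → ν.map (fun R => R * g) = ν)

/-! ### Multiplicativity of `γ` -/

/-- The homogeneous quadratic form of `gamma`, which agrees with it on unit quaternions and is
multiplicative on all of `ℝ⁴`. -/
noncomputable def gammaHom (q : Fin 4 → ℝ) : Matrix (Fin 3) (Fin 3) ℝ :=
  !![(q 0)^2 + (q 1)^2 - (q 2)^2 - (q 3)^2, 2*(q 1)*(q 2) - 2*(q 0)*(q 3),
      2*(q 1)*(q 3) + 2*(q 0)*(q 2);
     2*(q 1)*(q 2) + 2*(q 0)*(q 3), (q 0)^2 - (q 1)^2 + (q 2)^2 - (q 3)^2,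
      2*(q 2)*(q 3) - 2*(q 0)*(q 1);
     2*(q 1)*(q 3) - 2*(q 0)*(q 2), 2*(q 2)*(q 3) + 2*(q 0)*(q 1),
      (q 0)^2 - (q 1)^2 - (q 2)^2 + (q 3)^2]

lemma gamma_eq_gammaHom {q : Fin 4 → ℝ} (hq : ∑ k, (q k)^2 = 1) : gamma q = gammaHom q := by
  simp only [Fin.sum_univ_four] at hq
  ext i j
  fin_cases i <;> fin_cases j <;> simp [gamma, gammaHom] <;> linarith

/-- The matrix of right multiplication by the quaternion `p`. -/
noncomputable def rightMul (p : Fin 4 → ℝ) : Matrix (Fin 4) (Fin 4) ℝ :=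
  !![p 0, -p 1, -p 2, -p 3;
     p 1, p 0, p 3, -p 2;
     p 2, -p 3, p 0, p 1;
     p 3, p 2, -p 1, p 0]

lemma rightMul_orthogonal {p : Fin 4 → ℝ} (hp : ∑ k, (p k)^2 = 1) :
    (rightMul p)ᵀ * rightMul p = 1 := by
  simp only [Fin.sum_univ_four] at hp
  ext i j
  fin_cases i <;> fin_cases j <;>
    simp [rightMul, Matrix.mul_apply, Fin.sum_univ_four] <;> linarith

lemma gammaHom_rightMul (p q : Fin 4 → ℝ) :
    gammaHom (rightMul p *ᵥ q) = gammaHom q * gammaHom p := by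
  ext i j
  fin_cases i <;> fin_cases j <;>
    simp [gammaHom, rightMul, Matrix.mul_apply, Matrix.mulVec, dotProduct, Fin.sum_univ_four,
      Fin.sum_univ_three] <;> ring

lemma norm_rightMul {p q : Fin 4 → ℝ} (hp : ∑ k, (p k)^2 = 1) (hq : ∑ k, (q k)^2 = 1) :
    ∑ k, ((rightMul p *ᵥ q) k)^2 = 1 := by
  simp only [Fin.sum_univ_four] at hp hq
  simp [rightMul, Matrix.mulVec, dotProduct, Fin.sum_univ_four]
  linear_combination (q 0 ^ 2 + q 1 ^ 2 + q 2 ^ 2 + q 3 ^ 2) * hp + hq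

lemma gamma_rightMul {p q : Fin 4 → ℝ} (hp : ∑ k, (p k)^2 = 1) (hq : ∑ k, (q k)^2 = 1) :
    gamma (rightMul p *ᵥ q) = gamma q * gamma p := by
  rw [gamma_eq_gammaHom (norm_rightMul hp hq), gamma_eq_gammaHom hp, gamma_eq_gammaHom hq,
    gammaHom_rightMul]

lemma isSO3_gamma {q : Fin 4 → ℝ} (hq : ∑ k, (q k)^2 = 1) : IsSO3 (gamma q) := by
  rw [gamma_eq_gammaHom hq]
  simp only [Fin.sum_univ_four] at hq
  have h2 : (q 0 ^ 2 + q 1 ^ 2 + q 2 ^ 2 + q 3 ^ 2) ^ 2 = 1 := by rw [hq]; norm_num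
  have h3 : (q 0 ^ 2 + q 1 ^ 2 + q 2 ^ 2 + q 3 ^ 2) ^ 3 = 1 := by rw [hq]; norm_num
  refine ⟨?_, ?_⟩
  · ext i j
    fin_cases i <;> fin_cases j <;>
      simp [gammaHom, Matrix.mul_apply, Fin.sum_univ_three] <;> linarith
  · rw [Matrix.det_fin_three]
    simp [gammaHom]
    linarith

/-! ### Surjectivity of `γ` onto `SO(3)` -/

/-- A rotation equals its cofactor matrix. -/
lemma IsSO3.adjugate_eq {R : Matrix (Fin 3) (Fin 3) ℝ} (hR : IsSO3 R) : R.adjugate = Rᵀ := by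
  have h : R.adjugate * R = 1 := by rw [Matrix.adjugate_mul, hR.2, one_smul]
  calc R.adjugate = R.adjugate * (R * Rᵀ) := by rw [mul_eq_one_comm.mp hR.1, mul_one]
    _ = Rᵀ := by rw [← mul_assoc, h, one_mul]

/-- A rotation `R` with `1 + tr R > 0` (that is, rotation angle not `π`) is `γ` of the quaternion
with real part `√(1 + tr R) / 2` and imaginary part proportional to the axial vector of `R`. -/
lemma exists_gamma_eq_of_trace {R : Matrix (Fin 3) (Fin 3) ℝ} (hR : IsSO3 R)
    (ht : 0 < 1 + R.trace) : ∃ p : Fin 4 → ℝ, ∑ k, (p k)^2 = 1 ∧ gamma p = R := by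
  have hadj := hR.adjugate_eq
  have hR1 := hR.1
  have hR2 := mul_eq_one_comm.mp hR.1
  rw [Matrix.adjugate_fin_three] at hadj
  rw [Matrix.trace_fin_three] at ht
  have e := fun i j => congrFun (congrFun hR1 i) j
  have e' := fun i j => congrFun (congrFun hR2 i) j
  have f := fun i j => congrFun (congrFun hadj i) j
  simp [Fin.forall_fin_succ, Matrix.mul_apply, Fin.sum_univ_three] at e e' f
  obtain ⟨⟨e00, e01, e02⟩, ⟨e10, e11, e12⟩, e20, e21, e22⟩ := e
  obtain ⟨⟨o00, o01, o02⟩, ⟨o10, o11, o12⟩, o20, o21, o22⟩ := e'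
  obtain ⟨⟨f00, f01, f02⟩, ⟨f10, f11, f12⟩, f20, f21, f22⟩ := f
  obtain ⟨t, htd⟩ : ∃ t, t = 1 + (R 0 0 + R 1 1 + R 2 2) := ⟨_, rfl⟩
  obtain ⟨u, hu⟩ : ∃ u, u = R 2 1 - R 1 2 := ⟨_, rfl⟩
  obtain ⟨v, hv⟩ : ∃ v, v = R 0 2 - R 2 0 := ⟨_, rfl⟩
  obtain ⟨w, hw⟩ : ∃ w, w = R 1 0 - R 0 1 := ⟨_, rfl⟩
  have ht' : 0 < t := by rw [htd]; exact ht
  obtain ⟨c, hc⟩ : ∃ c : ℝ, c ^ 2 * (4 * t) = 1 :=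
    ⟨√(1 / (4 * t)), by rw [Real.sq_sqrt (by positivity)]; field_simp⟩
  -- `c • (t, u, v, w)` is the required quaternion. The identities below say that `(t, u, v, w)` has
  -- squared norm `4t` and that `gammaHom` sends it to `4tR`; each is linear in the entries of the
  -- matrix equations `RᵀR = 1`, `RRᵀ = 1` and `adj R = Rᵀ`.
  have hn : t ^ 2 + u ^ 2 + v ^ 2 + w ^ 2 = 4 * t := by subst htd hu hv hw; linarith
  have h0 : t ^ 2 + u ^ 2 - v ^ 2 - w ^ 2 = 4 * t * R 0 0 := by subst htd hu hv hw; linarith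
  have h1 : t ^ 2 - u ^ 2 + v ^ 2 - w ^ 2 = 4 * t * R 1 1 := by subst htd hu hv hw; linarith
  have h2 : t ^ 2 - u ^ 2 - v ^ 2 + w ^ 2 = 4 * t * R 2 2 := by subst htd hu hv hw; linarith
  have huv : u * v = t * (R 0 1 + R 1 0) := by subst htd hu hv hw; linarith
  have huw : u * w = t * (R 0 2 + R 2 0) := by subst htd hu hv hw; linarith
  have hvw : v * w = t * (R 1 2 + R 2 1) := by subst htd hu hv hw; linarith
  have hp : ∑ k, ((c • ![t, u, v, w]) k)^2 = 1 := by
    simp [Fin.sum_univ_four]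
    linear_combination c ^ 2 * hn + hc
  refine ⟨c • ![t, u, v, w], hp, ?_⟩
  rw [gamma_eq_gammaHom hp]
  ext i j
  fin_cases i <;> fin_cases j <;> simp [gammaHom]
  · linear_combination c ^ 2 * h0 + R 0 0 * hc
  · linear_combination 2 * c ^ 2 * huv - 2 * c ^ 2 * t * hw + R 0 1 * hc
  · linear_combination 2 * c ^ 2 * huw + 2 * c ^ 2 * t * hv + R 0 2 * hc
  · linear_combination 2 * c ^ 2 * huv + 2 * c ^ 2 * t * hw + R 1 0 * hc
  · linear_combination c ^ 2 * h1 + R 1 1 * hc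
  · linear_combination 2 * c ^ 2 * hvw - 2 * c ^ 2 * t * hu + R 1 2 * hc
  · linear_combination 2 * c ^ 2 * huw - 2 * c ^ 2 * t * hv + R 2 0 * hc
  · linear_combination 2 * c ^ 2 * hvw + 2 * c ^ 2 * t * hu + R 2 1 * hc
  · linear_combination c ^ 2 * h2 + R 2 2 * hc

lemma IsSO3.mul {R T : Matrix (Fin 3) (Fin 3) ℝ} (hR : IsSO3 R) (hT : IsSO3 T) :
    IsSO3 (R * T) := by
  refine ⟨?_, by rw [Matrix.det_mul, hR.2, hT.2, one_mul]⟩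
  rw [Matrix.transpose_mul, mul_assoc, ← mul_assoc Rᵀ, hR.1, one_mul, hT.1]

/-- The coordinate unit quaternions `1, i, j, k` go to the four diagonal rotations. (In `EMat` the
identity comes last.) -/
lemma gamma_single (i : Fin 4) : gamma (Pi.single i 1) = ![1, EMat 0, EMat 1, EMat 2] i := by
  ext a b
  fin_cases i <;> fin_cases a <;> fin_cases b <;> simp [gamma, EMat] <;> norm_num

/-- Every rotation is `γ` of a unit quaternion. The numbers `1 + tr (R E)`, as `E` runs over the
four diagonal rotations, add up to `4`, so one of them is positive and `exists_gamma_eq_of_trace`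
applies to that `R E`. -/
lemma exists_gamma_eq {R : Matrix (Fin 3) (Fin 3) ℝ} (hR : IsSO3 R) :
    ∃ p : Fin 4 → ℝ, ∑ k, (p k)^2 = 1 ∧ gamma p = R := by
  have hs : ∀ i : Fin 4, ∑ k, ((Pi.single i 1 : Fin 4 → ℝ) k)^2 = 1 := by
    intro i; simp [Pi.single_apply, ite_pow]
  obtain ⟨i, hi⟩ : ∃ i, 0 < 1 + (R * gamma (Pi.single i 1)).trace := by
    by_contra! h
    have h0 := h 0
    have h1 := h 1
    have h2 := h 2
    have h3 := h 3
    rw [gamma_single] at h0 h1 h2 h3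
    simp [EMat, Matrix.trace_fin_three] at h0 h1 h2 h3
    linarith
  obtain ⟨p, hp, hpR⟩ := exists_gamma_eq_of_trace (hR.mul (isSO3_gamma (hs i))) hi
  refine ⟨_, norm_rightMul (hs i) hp, ?_⟩
  rw [gamma_rightMul (hs i) hp, hpR, mul_assoc]
  have h : gamma (Pi.single i 1) * gamma (Pi.single i 1) = 1 := by
    rw [gamma_single]
    ext a b
    fin_cases i <;> fin_cases a <;> fin_cases b <;> simp [EMat]
  rw [h, mul_one]

/-! ### The exponents -/

lemma trace_gamma_transpose_mul {p q : Fin 4 → ℝ} (hp : ∑ k, (p k)^2 = 1)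
    (hq : ∑ k, (q k)^2 = 1) :
    ((gamma p)ᵀ * gamma q).trace = 4 * (∑ k, p k * q k)^2 - 1 := by
  rw [gamma_eq_gammaHom hp, gamma_eq_gammaHom hq]
  simp only [Fin.sum_univ_four] at hp hq
  simp [gammaHom, Matrix.trace_fin_three, Matrix.mul_apply, Fin.sum_univ_three,
    Fin.sum_univ_four]
  linear_combination (-(q 0 ^ 2 + q 1 ^ 2 + q 2 ^ 2 + q 3 ^ 2)) * hp - hq

/-- The exponents of the two densities agree under `γ`. -/
lemma trace_eq_bingham (U V : Matrix (Fin 3) (Fin 3) ℝ) (s : Fin 3 → ℝ) (z : Fin 4 → ℝ)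
    (hz : z = ![s 0 - s 1 - s 2, s 1 - s 0 - s 2, s 2 - s 0 - s 1, s 0 + s 1 + s 2])
    (m : Fin 4 → Fin 4 → ℝ) (hm_unit : ∀ i, ∑ k, (m i k)^2 = 1)
    (hm : ∀ i, gamma (m i) = U * EMat i * Vᵀ) {q : Fin 4 → ℝ} (hq : ∑ k, (q k)^2 = 1) :
    ((U * Matrix.diagonal s * Vᵀ)ᵀ * gamma q).trace = ∑ i, z i * (∑ k, m i k * q k)^2 := by
  have hS : Matrix.diagonal s = ∑ i, (z i / 4) • EMat i := by
    ext a b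
    subst hz
    fin_cases a <;> fin_cases b <;> simp [Fin.sum_univ_four, EMat] <;> ring
  have hA : U * Matrix.diagonal s * Vᵀ = ∑ i, (z i / 4) • gamma (m i) := by
    simp only [hS, hm, Finset.mul_sum, Finset.sum_mul, Matrix.mul_smul, Matrix.smul_mul]
  have hz0 : ∑ i, z i = 0 := by
    subst hz
    simp [Fin.sum_univ_four]
    ring
  rw [hA, Matrix.transpose_sum, Finset.sum_mul, Matrix.trace_sum]
  simp only [Matrix.transpose_smul, Matrix.smul_mul, Matrix.trace_smul,
    trace_gamma_transpose_mul (hm_unit _) hq, smul_eq_mul]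
  rw [← sub_eq_zero, ← Finset.sum_sub_distrib]
  calc _ = ∑ i, (-1 / 4) * z i := Finset.sum_congr rfl fun i _ => by ring
    _ = 0 := by rw [← Finset.mul_sum, hz0, mul_zero]

/-! ### The push-forward of the sphere measure under `γ` -/

lemma measurable_matrix {α : Type*} [MeasurableSpace α] {f : α → Matrix (Fin 3) (Fin 3) ℝ}
    (h : ∀ i j, Measurable fun a => f a i j) : Measurable f :=
  measurable_pi_lambda _ fun i => measurable_pi_lambda _ fun j => h i j

lemma measurable_entry (i j : Fin 3) :
    Measurable fun R : Matrix (Fin 3) (Fin 3) ℝ => R i j :=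
  (measurable_pi_apply j).comp (measurable_pi_apply i)

lemma measurable_gamma : Measurable gamma := by
  refine measurable_matrix fun i j => ?_
  fin_cases i <;> fin_cases j <;> simp [gamma] <;> fun_prop

lemma measurable_mul₃ {α : Type*} [MeasurableSpace α] {f g : α → Matrix (Fin 3) (Fin 3) ℝ}
    (hf : Measurable f) (hg : Measurable g) : Measurable fun a => f a * g a := by
  refine measurable_matrix fun i j => ?_
  simp only [Matrix.mul_apply]
  exact Finset.measurable_sum _ fun k _ =>
    ((measurable_entry i k).comp hf).mul ((measurable_entry k j).comp hg)

lemma measurable_trace₃ (B : Matrix (Fin 3) (Fin 3) ℝ) :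
    Measurable fun R : Matrix (Fin 3) (Fin 3) ℝ => (B * R).trace := by
  simp only [Matrix.trace, Matrix.diag]
  exact Finset.measurable_sum _ fun i _ =>
    (measurable_entry i i).comp (measurable_mul₃ measurable_const measurable_id)

/-- The push-forward of `σ` under `γ` is `2π²` times the Haar measure. -/
lemma lintegral_gamma {σ : Measure (Fin 4 → ℝ)} (hσ : IsSphereMeasure σ)
    {ν : Measure (Matrix (Fin 3) (Fin 3) ℝ)} (hν : IsHaarSO3 ν)
    {F : Matrix (Fin 3) (Fin 3) ℝ → ENNReal} (hF : Measurable F) :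
    ∫⁻ q, F (gamma q) ∂σ = ENNReal.ofReal (2 * Real.pi ^ 2) * ∫⁻ R, F R ∂ν := by
  obtain ⟨hσ1, hσ2, hσ3⟩ := hσ
  obtain ⟨hν1, hν2, hν3, -⟩ := hν
  have : IsFiniteMeasure σ := ⟨by rw [hσ2]; exact ENNReal.ofReal_lt_top⟩
  have : IsProbabilityMeasure ν := ⟨hν2⟩
  have hσae : ∀ᵐ q ∂σ, ∑ k, (q k)^2 = 1 := hσ1
  have hνae : ∀ᵐ R ∂ν, IsSO3 R := hν1
  have hL : ∀ᵐ q ∂σ, ∫⁻ R, F (gamma q * R) ∂ν = ∫⁻ R, F R ∂ν := by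
    filter_upwards [hσae] with q hq
    conv_rhs => rw [← hν3 _ (isSO3_gamma hq)]
    exact (lintegral_map hF (measurable_mul₃ measurable_const measurable_id)).symm
  have hR : ∀ᵐ R ∂ν, ∫⁻ q, F (gamma q * R) ∂σ = ∫⁻ q, F (gamma q) ∂σ := by
    filter_upwards [hνae] with R hR
    obtain ⟨p, hp, rfl⟩ := exists_gamma_eq hR
    conv_rhs => rw [← hσ3 _ (rightMul_orthogonal hp)]
    refine Eq.trans (lintegral_congr_ae ?_) (lintegral_map (hF.comp measurable_gamma)
      (Continuous.matrix_mulVec continuous_const continuous_id).measurable).symm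
    filter_upwards [hσae] with q hq
    simp only [Function.comp_apply, id, gamma_rightMul hp hq]
  calc ∫⁻ q, F (gamma q) ∂σ = ∫⁻ R, ∫⁻ q, F (gamma q * R) ∂σ ∂ν := by
        rw [lintegral_congr_ae hR, lintegral_const, hν2, mul_one]
    _ = ∫⁻ q, ∫⁻ R, F (gamma q * R) ∂ν ∂σ := by
        refine lintegral_lintegral_swap (Measurable.aemeasurable ?_)
        exact hF.comp (measurable_mul₃ (measurable_gamma.comp measurable_snd) measurable_fst)
    _ = _ := by rw [lintegral_congr_ae hL, lintegral_const, hσ2, mul_comm]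

/-- With the matrix Fisher density `p_F(R) = exp(tr(AᵀR)) / ∫_{SO(3)} exp(tr(AᵀR')) dR'`
(w.r.t. the Haar probability measure on `SO(3)`) and the Bingham density
`p_B(q) = exp(Σᵢ zᵢ(mᵢ·q)²) / ∮_{S³} exp(Σᵢ zᵢ(mᵢ·q')²) dq'` (w.r.t. the surface measure on
`S³`), for every unit quaternion `q ∈ S³`, `p_F(γ(q)) = 2π² · p_B(q)`. -/
theorem stmt_6 (σ : Measure (Fin 4 → ℝ)) (hσ : IsSphereMeasure σ)
    (ν : Measure (Matrix (Fin 3) (Fin 3) ℝ)) (hν : IsHaarSO3 ν)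
    (U V : Matrix (Fin 3) (Fin 3) ℝ) (hU : IsSO3 U) (hV : IsSO3 V)
    (s : Fin 3 → ℝ) (A : Matrix (Fin 3) (Fin 3) ℝ) (hA : A = U * Matrix.diagonal s * Vᵀ)
    (z : Fin 4 → ℝ)
    (hz : z = ![s 0 - s 1 - s 2, s 1 - s 0 - s 2, s 2 - s 0 - s 1, s 0 + s 1 + s 2])
    (m : Fin 4 → Fin 4 → ℝ) (hm_unit : ∀ i, ∑ k, (m i k)^2 = 1)
    (hm : ∀ i, gamma (m i) = U * EMat i * Vᵀ) :
    ∀ q : Fin 4 → ℝ, (∑ k, (q k)^2 = 1) →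
      Real.exp ((Aᵀ * gamma q).trace) / (∫ R, Real.exp ((Aᵀ * R).trace) ∂ν)
        = 2 * Real.pi ^ 2 *
          (Real.exp (∑ i, z i * (∑ k, m i k * q k)^2) /
            ∫ q', Real.exp (∑ i, z i * (∑ k, m i k * q' k)^2) ∂σ) := by
  intro q hq
  have hB : ∀ q : Fin 4 → ℝ, ∑ k, (q k)^2 = 1 →
      (Aᵀ * gamma q).trace = ∑ i, z i * (∑ k, m i k * q k)^2 := fun q hq => by
    rw [hA]
    exact trace_eq_bingham U V s z hz m hm_unit hm hq
  have hf : Measurable fun R : Matrix (Fin 3) (Fin 3) ℝ => Real.exp ((Aᵀ * R).trace) :=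
    Real.measurable_exp.comp (measurable_trace₃ _)
  have hσae : ∀ᵐ q ∂σ, ∑ k, (q k)^2 = 1 := hσ.1
  have hI : ∫ q', Real.exp (∑ i, z i * (∑ k, m i k * q' k)^2) ∂σ
      = 2 * Real.pi ^ 2 * ∫ R, Real.exp ((Aᵀ * R).trace) ∂ν := by
    calc _ = ∫ q', Real.exp ((Aᵀ * gamma q').trace) ∂σ := by
          refine integral_congr_ae ?_
          filter_upwards [hσae] with q' hq'
          rw [hB q' hq']
      _ = _ := by
          rw [integral_eq_lintegral_of_nonneg_ae (.of_forall fun _ => (Real.exp_pos _).le)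
              (hf.comp measurable_gamma).aestronglyMeasurable,
            integral_eq_lintegral_of_nonneg_ae (.of_forall fun _ => (Real.exp_pos _).le)
              hf.aestronglyMeasurable,
            lintegral_gamma hσ hν (F := fun R => ENNReal.ofReal (Real.exp ((Aᵀ * R).trace)))
              hf.ennreal_ofReal,
            ENNReal.toReal_mul, ENNReal.toReal_ofReal (by positivity)]
  have hπ : (2 * Real.pi ^ 2 : ℝ) ≠ 0 := by positivity
  rw [hI, hB q hq, ← mul_div_assoc, mul_div_mul_left _ _ hπ]
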